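/- Suppose the feasible set F is nonempty, R_o(μ) ≤ R_m for all μ ∈ P, and ε > 0. If μ̄ ∈ P is an ε-optimal policy for the bounded sup-inf problem, i.e. l*_B ≤ inf_{λ ∈ Λ_B} L(μ̄, λ) + ε, then with ε^f := (R_m − R* + ε)/B the following hold: (i) R_o(μ̄) ≥ R* − ε; (ii) R_c(μ̄) ≥ ρ − ε^f; (iii) R_f(μ̄) ≥ 1 − δ − ε^f. -/

import Mathlib

/-!
Over the triangle `ΛB` the Lagrangian is affine, so its infimum is attained at a vertex:
`⨅ lam, L μ lam = Ro μ - B * v μ`, where `v μ` is the larger of the two constraint violations.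
The bounded sup-inf problem is therefore a penalty problem. The penalty vanishes on `F`, so its
optimal value is at least `Rstar`, and an `ε`-optimal `μbar` satisfies
`Rstar ≤ Ro μbar - B * v μbar + ε`. Bounding `v μbar` below by `0` gives the objective estimate;
bounding `Ro μbar` above by `Rm` gives the feasibility estimates.
-/

section Penalty

theorem csSup_image_le_ciSup {α ι : Type*} [ConditionallyCompleteLattice α] {f g : ι → α}
    {s : Set ι} (hs : s.Nonempty) (hg : BddAbove (Set.range g)) (hfg : ∀ i ∈ s, f i ≤ g i) :
    sSup (f '' s) ≤ ⨆ i, g i :=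
  csSup_le (hs.image f) (Set.forall_mem_image.2 fun i hi => (hfg i hi).trans (le_ciSup hg i))

variable {P : Type*} {r v : P → ℝ} {F : Set P} {B m ε : ℝ} {μbar : P}

theorem csSup_image_le_ciSup_sub_penalty (hB : 0 ≤ B) (hv : ∀ μ, 0 ≤ v μ)
    (hvF : ∀ μ ∈ F, v μ = 0) (hF : F.Nonempty) (hr : BddAbove (Set.range r)) :
    sSup (r '' F) ≤ ⨆ μ, (r μ - B * v μ) := by
  have hbdd : BddAbove (Set.range fun μ => r μ - B * v μ) :=
    hr.range_mono _ fun μ => sub_le_self _ (mul_nonneg hB (hv μ))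
  exact csSup_image_le_ciSup hF hbdd fun μ hμ => by simp [hvF μ hμ]

theorem objective_ge_and_violation_le_of_penalty_eps_opt (hB : 0 < B) (hv : ∀ μ, 0 ≤ v μ)
    (hvF : ∀ μ ∈ F, v μ = 0) (hF : F.Nonempty) (hr : ∀ μ, r μ ≤ m)
    (hopt : ⨆ μ, (r μ - B * v μ) ≤ r μbar - B * v μbar + ε) :
    sSup (r '' F) - ε ≤ r μbar ∧ v μbar ≤ (m - sSup (r '' F) + ε) / B := by
  have hval : sSup (r '' F) ≤ r μbar - B * v μbar + ε :=
    (csSup_image_le_ciSup_sub_penalty hB.le hv hvF hF ⟨m, Set.forall_mem_range.2 hr⟩).trans hopt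
  have hpen : 0 ≤ B * v μbar := mul_nonneg hB.le (hv μbar)
  exact ⟨by linarith, (le_div_iff₀' hB).2 (by linarith [hr μbar])⟩

end Penalty

section MultiplierTriangle

/-- The set `Λ_B` of nonnegative multiplier pairs of total weight at most `B`, over which the
Lagrangian of a problem with two constraints is minimized. -/
def multiplierTriangle {K : Type*} [Zero K] [Add K] [LE K] (B : K) : Set (K × K) :=
  {lam | 0 ≤ lam.1 ∧ 0 ≤ lam.2 ∧ lam.1 + lam.2 ≤ B}

variable {K : Type*} [CommRing K] [LinearOrder K] [IsOrderedRing K]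

theorem exists_mem_Icc_mul_eq_neg_mul_negPart {B : K} (hB : 0 ≤ B) (x : K) :
    ∃ t ∈ Set.Icc 0 B, t * x = -(B * x⁻) := by
  rcases le_total 0 x with hx | hx
  · exact ⟨0, Set.left_mem_Icc.2 hB, by simp [negPart_eq_zero.2 hx]⟩
  · exact ⟨B, Set.right_mem_Icc.2 hB, by simp [negPart_of_nonpos hx]⟩

theorem neg_mul_max_negPart_le_of_mem_multiplierTriangle {B : K} {lam : K × K}
    (hlam : lam ∈ multiplierTriangle B) (x y : K) :
    -(B * max x⁻ y⁻) ≤ lam.1 * x + lam.2 * y := by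
  obtain ⟨h₁, h₂, hsum⟩ := hlam
  have hx : -max x⁻ y⁻ ≤ x := neg_le.1 ((neg_le_negPart x).trans (le_max_left _ _))
  have hy : -max x⁻ y⁻ ≤ y := neg_le.1 ((neg_le_negPart y).trans (le_max_right _ _))
  have hmax : 0 ≤ max x⁻ y⁻ := (negPart_nonneg x).trans (le_max_left _ _)
  calc -(B * max x⁻ y⁻)
    _ ≤ -((lam.1 + lam.2) * max x⁻ y⁻) :=
      neg_le_neg (mul_le_mul_of_nonneg_right hsum hmax)
    _ = lam.1 * -max x⁻ y⁻ + lam.2 * -max x⁻ y⁻ := by ring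
    _ ≤ lam.1 * x + lam.2 * y := by gcongr

theorem exists_mem_multiplierTriangle_eq_neg_mul_max_negPart {B : K} (hB : 0 ≤ B) (x y : K) :
    ∃ lam ∈ multiplierTriangle B, lam.1 * x + lam.2 * y = -(B * max x⁻ y⁻) := by
  rcases le_total y⁻ x⁻ with hyx | hxy
  · obtain ⟨t, ⟨ht₀, htB⟩, ht⟩ := exists_mem_Icc_mul_eq_neg_mul_negPart hB x
    exact ⟨(t, 0), ⟨ht₀, le_rfl, by simpa using htB⟩, by simp [ht, max_eq_left hyx]⟩
  · obtain ⟨t, ⟨ht₀, htB⟩, ht⟩ := exists_mem_Icc_mul_eq_neg_mul_negPart hB y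
    exact ⟨(0, t), ⟨le_rfl, ht₀, by simpa using htB⟩, by simp [ht, max_eq_right hxy]⟩

theorem isLeast_image_multiplierTriangle {B : K} (hB : 0 ≤ B) (r x y : K) :
    IsLeast ((fun lam : K × K => r + lam.1 * x + lam.2 * y) '' multiplierTriangle B)
      (r - B * max x⁻ y⁻) := by
  simp only [add_assoc, sub_eq_add_neg]
  constructor
  · obtain ⟨lam, hlam, heq⟩ := exists_mem_multiplierTriangle_eq_neg_mul_max_negPart hB x y
    exact ⟨lam, hlam, congrArg (r + ·) heq⟩
  · rintro _ ⟨lam, hlam, rfl⟩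
    exact add_le_add_right (neg_mul_max_negPart_le_of_mem_multiplierTriangle hlam x y) r

theorem ciInf_multiplierTriangle {B : ℝ} (hB : 0 ≤ B) (r x y : ℝ) :
    ⨅ lam : multiplierTriangle B, (r + lam.1.1 * x + lam.1.2 * y) = r - B * max x⁻ y⁻ :=
  sInf_image'.symm.trans (isLeast_image_multiplierTriangle hB r x y).csInf_eq

end MultiplierTriangle

/-- **Lemma 1 (ε-optimal policies for the bounded sup-inf problem).**
If the feasible set `F` is nonempty, `Ro μ ≤ Rm` for all policies `μ`, `ε > 0`, and
`μbar` is an `ε`-optimal policy for the bounded sup-inf problem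
`l*_B = sup_μ inf_{λ ∈ Λ_B} L(μ, λ)`, then `μbar` is `ε`-optimal in objective reward
and `(Rm − R* + ε)/B`-feasible in both constraints. -/
theorem lemma_eps_opt
    {P : Type*} [Nonempty P]
    (Ro Rc Rf : P → ℝ) (ρ δ B Rm : ℝ) (hB : 0 < B)
    (L : P → ℝ × ℝ → ℝ)
    (hL : ∀ μ lam, L μ lam = Ro μ + lam.1 * (Rc μ - ρ) + lam.2 * (Rf μ - (1 - δ)))
    (ΛB : Set (ℝ × ℝ))
    (hΛB : ΛB = {lam : ℝ × ℝ | 0 ≤ lam.1 ∧ 0 ≤ lam.2 ∧ lam.1 + lam.2 ≤ B})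
    (F : Set P) (hF : F = {μ | ρ ≤ Rc μ ∧ 1 - δ ≤ Rf μ})
    (hFne : F.Nonempty)
    (hRm : ∀ μ, Ro μ ≤ Rm)
    (Rstar : ℝ) (hRstar : Rstar = sSup (Ro '' F))
    (lB : ℝ) (hlB : lB = ⨆ μ : P, ⨅ lam : ΛB, L μ (lam : ℝ × ℝ))
    (ε : ℝ) (hε : 0 < ε)
    (μbar : P)
    (hopt : lB ≤ (⨅ lam : ΛB, L μbar (lam : ℝ × ℝ)) + ε) :
    Ro μbar ≥ Rstar - ε ∧
    Rc μbar ≥ ρ - (Rm - Rstar + ε) / B ∧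
    Rf μbar ≥ 1 - δ - (Rm - Rstar + ε) / B := by
  have hinf (μ : P) :
      ⨅ lam : ΛB, L μ lam = Ro μ - B * max (Rc μ - ρ)⁻ (Rf μ - (1 - δ))⁻ := by
    subst hΛB
    simp only [hL]
    exact ciInf_multiplierTriangle hB.le _ _ _
  have hviol_nonneg (μ : P) : 0 ≤ max (Rc μ - ρ)⁻ (Rf μ - (1 - δ))⁻ :=
    (negPart_nonneg _).trans (le_max_left _ _)
  have hviol_feasible : ∀ μ ∈ F, max (Rc μ - ρ)⁻ (Rf μ - (1 - δ))⁻ = 0 := by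
    rw [hF]
    rintro μ ⟨hc, hf⟩
    rw [negPart_eq_zero.2 (sub_nonneg.2 hc), negPart_eq_zero.2 (sub_nonneg.2 hf), max_self]
  simp only [hlB, hinf] at hopt
  obtain ⟨hobj, hviol⟩ := objective_ge_and_violation_le_of_penalty_eps_opt
    hB hviol_nonneg hviol_feasible hFne hRm hopt
  rw [← hRstar] at hobj hviol
  obtain ⟨hviol_c, hviol_f⟩ := max_le_iff.1 hviol
  have hc := (neg_le_negPart _).trans hviol_c
  have hf := (neg_le_negPart _).trans hviol_f
  exact ⟨hobj, by linarith, by linarith⟩
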